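/- arXiv:2012.04711 — 2 statements merged into one kernel-verified Lean document; each statement's English description precedes it below -/
import Mathlib

section
/- For every integer t ≥ 0 and 1 ≤ k ≤ n−1, the number of lattice points in the t-th dilation of the hypersimplex Δ_{k,n} equals the number of lattice points x ∈ {0,...,t}^{n} with Σ_{i=1}^{n} x_i = kt, and this count is a polynomial function of t whose coefficient of t^m is e_{k,n,m} = (1/(n−1)!) Σ_{ℓ=0}^{k−1} W(ℓ,n,m+1) A(m, k−ℓ−1) for 1 ≤ m ≤ n−1, where A denotes Eulerian numbers and W the weighted Lah numbers. -/
noncomputable section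

open Finset Pointwise

/-- The weight of a linearly ordered block (given as a list): the number of its
elements smaller than its first element. -/
def blockWeight (b : List ℕ) : ℕ := (b.filter (fun x => x < b.headI)).length

/-- `P` is a partition of `{1,…,n}` into linearly ordered blocks (nonempty lists
of distinct elements, pairwise disjoint, whose union is `{1,…,n}`). -/
def IsOrderedPartition (n : ℕ) (P : Finset (List ℕ)) : Prop :=
  (∀ b ∈ P, b ≠ [] ∧ b.Nodup) ∧
  (∀ b₁ ∈ P, ∀ b₂ ∈ P, b₁ ≠ b₂ → ∀ x, x ∈ b₁ → x ∉ b₂) ∧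
  (∀ x : ℕ, (∃ b ∈ P, x ∈ b) ↔ x ∈ Finset.Icc 1 n)

/-- The weight of an ordered partition: the sum of the weights of its blocks. -/
def partitionWeight (P : Finset (List ℕ)) : ℕ := ∑ b ∈ P, blockWeight b

/-- The weighted Lah number `W(ℓ,n,m)`: the number of partitions of `{1,…,n}`
into exactly `m` linearly ordered blocks with total weight `ℓ`.
(It vanishes for `ℓ < 0`.) -/
def weightedLah (ℓ : ℤ) (n m : ℕ) : ℕ :=
  Set.ncard {P : Finset (List ℕ) |
    IsOrderedPartition n P ∧ P.card = m ∧ (partitionWeight P : ℤ) = ℓ}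

/-- The number of cycles of a permutation of `Fin n` (fixed points count as cycles). -/
def numCycles {n : ℕ} (σ : Equiv.Perm (Fin n)) : ℕ :=
  Multiset.card σ.cycleType + (n - σ.cycleType.sum)

/-- The unsigned Stirling number of the first kind: the number of permutations of
`n` elements with exactly `m` cycles. -/
def stirlingFirst (n m : ℕ) : ℕ :=
  Nat.card {σ : Equiv.Perm (Fin n) // numCycles σ = m}

/-- The number of descents of a permutation of `Fin m`. -/
def descentCount (m : ℕ) (σ : Equiv.Perm (Fin m)) : ℕ :=
  ((Finset.range (m - 1)).filter (fun i =>
    ((List.ofFn (fun j => (σ j : ℕ))).getD (i + 1) 0) <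
      ((List.ofFn (fun j => (σ j : ℕ))).getD i 0))).card

/-- The Eulerian number `A(m,j)`: permutations of `{1,…,m}` with exactly `j` descents. -/
def eulerian (m j : ℕ) : ℕ :=
  Nat.card {σ : Equiv.Perm (Fin m) // descentCount m σ = j}

/-- The coefficient `e_{k,n,m}` of the Ehrhart polynomial of the hypersimplex. -/
def eCoef (k n m : ℕ) : ℚ :=
  (1 / (n - 1).factorial : ℚ) *
    ∑ ℓ ∈ Finset.range k, (weightedLah ℓ n (m + 1) : ℚ) * (eulerian m (k - ℓ - 1) : ℚ)

/-- Number of lattice points of the `t`-th dilate of the hypersimplex `Δ_{k,n}`,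
i.e. points of `{0,…,t}^n` with coordinate sum `k·t`. -/
def hyperCount (k n t : ℕ) : ℕ :=
  Nat.card {x : Fin n → ℤ // (∀ i, 0 ≤ x i ∧ x i ≤ (t : ℤ)) ∧ ∑ i, x i = (k : ℤ) * t}

/-- Number of lattice points of the `t`-th dilate of the half-open hypersimplex
`Δ'_{k,n} ⊆ ℝ^{n-1}` (for `k > 1`). -/
def halfOpenCount (k n t : ℕ) : ℕ :=
  Nat.card {x : Fin (n - 1) → ℤ // (∀ i, 0 ≤ x i ∧ x i ≤ (t : ℤ)) ∧
    ((k : ℤ) - 1) * t < ∑ i, x i ∧ ∑ i, x i ≤ (k : ℤ) * t}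

/-- Number of lattice points of the `t`-th dilate of the independence polytope of
`U_{k,n}`, i.e. points of `{0,…,t}^n` with coordinate sum at most `k·t`. -/
def indepCount (k n t : ℕ) : ℕ :=
  Nat.card {x : Fin n → ℤ // (∀ i, 0 ≤ x i ∧ x i ≤ (t : ℤ)) ∧ ∑ i, x i ≤ (k : ℤ) * t}

/-- Number of lattice points of a region `S ⊆ ℝ^d`. -/
def latticeCount {d : ℕ} (S : Set (Fin d → ℝ)) : ℕ :=
  Nat.card {x : Fin d → ℤ // (fun i => (x i : ℝ)) ∈ S}

/-- The hypersimplex `Δ_{k,n} ⊆ ℝ^n`. -/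
def hyperSimplex (k n : ℕ) : Set (Fin n → ℝ) :=
  {x | (∀ i, 0 ≤ x i ∧ x i ≤ 1) ∧ ∑ i, x i = (k : ℝ)}

/-!
Put `n = N + 1`. Expanding `((1 - X ^ (t + 1)) / (1 - X)) ^ n` writes the lattice point count as
`∑ j < k, (-1) ^ j * binomial(n, j) * binomial((k - j) t + N - j, N)`, a polynomial in `t`.
The alternating sums over `j` that occur in its coefficients are matched with weighted Lah numbers
by the exponential formula: giving a block of weight `w` the variable `y (1 - z) z ^ w`, the
generating function of all ordered partitions of `{1,…,n}` is `n!` times the coefficient of `x ^ n`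
in `(1 - z x) ^ y * (1 - x) ^ (-y)`. Its coefficient of `y ^ (m + 1)` equals
`(1 - z) ^ (m + 1) * ∑ ℓ, W(ℓ, n, m + 1) z ^ ℓ`. Worpitzky's identity gives
`∑ c, c ^ m z ^ c = z * ∑ j, A(m, j) z ^ j / (1 - z) ^ (m + 1)`, and the powers of `1 - z` cancel in
the product of the two series.
-/

section ListPartitions

open PowerSeries
open scoped Nat

variable {α : Type*}

/-- The linear orderings of a finite set, as lists. -/
def arrangements (B : Finset α) : Finset (List α) :=
  ⟨B.val.lists, Multiset.lists_nodup_finset B⟩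

lemma card_arrangements (B : Finset α) : #(arrangements B) = (#B)! := by
  rw [arrangements, card_mk, ← coe_toList, Multiset.lists_coe, Multiset.coe_card,
    List.length_permutations, length_toList]

variable [DecidableEq α]

lemma mem_arrangements {B : Finset α} {l : List α} :
    l ∈ arrangements B ↔ l.Nodup ∧ l.toFinset = B := by
  rw [arrangements, mem_mk, Multiset.mem_lists_iff, Multiset.quot_mk_to_coe]
  constructor
  · intro h
    have hl : l.Nodup := by simpa [h] using B.nodup
    exact ⟨hl, val_injective (by rw [List.toFinset_val, hl.dedup, h])⟩
  · rintro ⟨hl, rfl⟩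
    rw [List.toFinset_val, hl.dedup]

lemma cons_mem_arrangements {B : Finset α} {a : α} {l : List α} :
    a :: l ∈ arrangements B ↔ a ∈ B ∧ l ∈ arrangements (B.erase a) := by
  rw [mem_arrangements, mem_arrangements, List.nodup_cons, List.toFinset_cons]
  constructor
  · rintro ⟨⟨ha, hl⟩, rfl⟩
    exact ⟨mem_insert_self a _, hl, (erase_insert (mt List.mem_toFinset.1 ha)).symm⟩
  · rintro ⟨ha, hl, hlB⟩
    refine ⟨⟨fun hal => ?_, hl⟩, by rw [hlB, insert_erase ha]⟩
    exact notMem_erase a B (hlB ▸ List.mem_toFinset.2 hal)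

lemma sum_arrangements_eq_sum_cons {M : Type*} [AddCommMonoid M] {B : Finset α}
    (hB : B.Nonempty) (f : List α → M) :
    ∑ l ∈ arrangements B, f l = ∑ a ∈ B, ∑ l ∈ arrangements (B.erase a), f (a :: l) := by
  rw [sum_sigma']
  symm
  refine sum_nbij (fun q => q.1 :: q.2) ?_ ?_ ?_ fun _ _ => rfl
  · intro q hq
    exact cons_mem_arrangements.2 (mem_sigma.1 hq)
  · rintro ⟨a, l⟩ _ ⟨a', l'⟩ _ h
    simp_all
  · rintro (_ | ⟨a, l⟩) hl
    · obtain rfl : ∅ = B := (mem_arrangements.1 hl).2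
      exact absurd rfl hB.ne_empty
    · exact ⟨⟨a, l⟩, mem_sigma.2 (cons_mem_arrangements.1 hl), rfl⟩

/-- `P` is a partition of `S` into linearly ordered blocks. This extends `IsOrderedPartition` from
`{1,…,n}` to arbitrary finite sets, so that blocks can be split off one at a time. -/
structure IsListPartition (S : Finset α) (P : Finset (List α)) : Prop where
  ne_nil : ∀ b ∈ P, b ≠ []
  nodup : ∀ b ∈ P, b.Nodup
  disjoint : (P : Set (List α)).Pairwise List.Disjoint
  mem_iff : ∀ x, (∃ b ∈ P, x ∈ b) ↔ x ∈ S

namespace IsListPartition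

variable {S : Finset α} {P : Finset (List α)} {b : List α}

lemma toFinset_subset (hP : IsListPartition S P) (hb : b ∈ P) : b.toFinset ⊆ S :=
  fun x hx => (hP.mem_iff x).1 ⟨b, hb, List.mem_toFinset.1 hx⟩

lemma notMem_of_mem_sdiff (hP : IsListPartition (S \ b.toFinset) P) {c : List α} (hc : c ∈ P)
    {x : α} (hx : x ∈ c) : x ∉ b := by
  have := (hP.mem_iff x).1 ⟨c, hc, hx⟩
  simp_all

lemma insert (hne : b ≠ []) (hb : b.Nodup) (hbS : b.toFinset ⊆ S)
    (hP : IsListPartition (S \ b.toFinset) P) : IsListPartition S (insert b P) where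
  ne_nil := forall_mem_insert _ _ _ |>.2 ⟨hne, hP.ne_nil⟩
  nodup := forall_mem_insert _ _ _ |>.2 ⟨hb, hP.nodup⟩
  disjoint := by
    rw [coe_insert, Set.pairwise_insert]
    refine ⟨hP.disjoint, fun c hc _ => ?_⟩
    have hbc : b.Disjoint c := fun x hxb hxc => hP.notMem_of_mem_sdiff hc hxc hxb
    exact ⟨hbc, hbc.symm⟩
  mem_iff x := by
    have hxS : x ∈ b → x ∈ S := fun hx => hbS (List.mem_toFinset.2 hx)
    rw [exists_mem_insert, hP.mem_iff, mem_sdiff, List.mem_toFinset]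
    tauto

lemma erase (hP : IsListPartition S P) (hb : b ∈ P) :
    IsListPartition (S \ b.toFinset) (P.erase b) where
  ne_nil c hc := hP.ne_nil c (mem_of_mem_erase hc)
  nodup c hc := hP.nodup c (mem_of_mem_erase hc)
  disjoint := hP.disjoint.mono (coe_subset.2 (erase_subset b P))
  mem_iff x := by
    rw [mem_sdiff, List.mem_toFinset, ← hP.mem_iff]
    constructor
    · rintro ⟨c, hc, hx⟩
      obtain ⟨hcb, hcP⟩ := mem_erase.1 hc
      exact ⟨⟨c, hcP, hx⟩, hP.disjoint hcP hb hcb hx⟩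
    · rintro ⟨⟨c, hc, hx⟩, hxb⟩
      exact ⟨c, mem_erase.2 ⟨fun h => hxb (h ▸ hx), hc⟩, hx⟩

end IsListPartition

open Classical in
/-- The finite set of all partitions of `S` into linearly ordered blocks. -/
def listPartitions (S : Finset α) : Finset (Finset (List α)) :=
  {P ∈ (S.powerset.biUnion arrangements).powerset | IsListPartition S P}

lemma mem_listPartitions {S : Finset α} {P : Finset (List α)} :
    P ∈ listPartitions S ↔ IsListPartition S P := by
  classical
  rw [listPartitions, mem_filter, and_iff_right_iff_imp]
  intro hP
  refine mem_powerset.2 fun b hb => mem_biUnion.2 ⟨b.toFinset, ?_, ?_⟩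
  · exact mem_powerset.2 (hP.toFinset_subset hb)
  · exact mem_arrangements.2 ⟨hP.nodup b hb, rfl⟩

lemma listPartitions_empty : listPartitions (∅ : Finset α) = {∅} := by
  ext P
  rw [mem_listPartitions, mem_singleton]
  constructor
  · intro hP
    refine eq_empty_of_forall_notMem fun b hb => hP.ne_nil b hb ?_
    simpa using hP.toFinset_subset hb
  · rintro rfl
    exact ⟨by simp, by simp, by simp, by simp⟩

lemma subset_erase_and_mem_arrangements_insert_iff {S B : Finset α} {a : α} {b : List α}
    (ha : a ∈ S) : B ⊆ S.erase a ∧ b ∈ arrangements (insert a B) ↔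
      B = b.toFinset.erase a ∧ a ∈ b ∧ b.Nodup ∧ b.toFinset ⊆ S := by
  rw [mem_arrangements, ← List.mem_toFinset]
  constructor
  · rintro ⟨hB, hb, hbB⟩
    have haB : a ∉ B := fun h => notMem_erase a S (hB h)
    rw [hbB, erase_insert haB]
    exact ⟨rfl, mem_insert_self a B, hb, insert_subset ha (hB.trans (erase_subset a S))⟩
  · rintro ⟨rfl, hab, hb, hbS⟩
    exact ⟨erase_subset_erase a hbS, hb, (insert_erase hab).symm⟩

lemma sum_listPartitions_of_mem {M : Type*} [AddCommMonoid M] {S : Finset α} {a : α}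
    (ha : a ∈ S) (f : Finset (List α) → M) :
    ∑ P ∈ listPartitions S, f P = ∑ B ∈ (S.erase a).powerset, ∑ b ∈ arrangements (insert a B),
      ∑ Q ∈ listPartitions (S \ insert a B), f (insert b Q) := by
  simp_rw [← sum_product']
  rw [sum_sigma']
  symm
  have mem_iff (B b Q) : (⟨B, b, Q⟩ : Σ _ : Finset α, List α × Finset (List α)) ∈
      (S.erase a).powerset.sigma
        (fun B => arrangements (insert a B) ×ˢ listPartitions (S \ insert a B)) ↔
      (B = b.toFinset.erase a ∧ a ∈ b ∧ b.Nodup ∧ b.toFinset ⊆ S) ∧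
        IsListPartition (S \ b.toFinset) Q := by
    rw [mem_sigma, mem_product, mem_powerset, mem_listPartitions, ← and_assoc,
      ← subset_erase_and_mem_arrangements_insert_iff ha]
    exact and_congr_right fun h => by rw [(mem_arrangements.1 h.2).2]
  refine sum_nbij (fun q => insert q.2.1 q.2.2) ?_ ?_ ?_ fun _ _ => rfl
  · rintro ⟨B, b, Q⟩ hq
    obtain ⟨⟨-, hab, hb, hbS⟩, hQ⟩ := (mem_iff B b Q).1 hq
    exact mem_listPartitions.2 (hQ.insert (List.ne_nil_of_mem hab) hb hbS)
  · rintro ⟨B, b, Q⟩ hq ⟨B', b', Q'⟩ hq' heq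
    obtain ⟨⟨rfl, hab, -⟩, hQ⟩ := (mem_iff _ _ _).1 hq
    obtain ⟨⟨rfl, hab', -⟩, hQ'⟩ := (mem_iff _ _ _).1 hq'
    dsimp only at heq
    have hbQ : b ∉ Q := fun h => hQ.notMem_of_mem_sdiff h hab hab
    obtain rfl : b = b' := (mem_insert.1 (heq ▸ mem_insert_self b Q)).resolve_right
      fun h => hQ'.notMem_of_mem_sdiff h hab hab'
    have hbQ' : b ∉ Q' := fun h => hQ'.notMem_of_mem_sdiff h hab hab
    rw [← erase_insert hbQ, heq, erase_insert hbQ']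
  · intro P hP
    have hP := mem_listPartitions.1 (mem_coe.1 hP)
    obtain ⟨b, hb, hab⟩ := (hP.mem_iff a).2 ha
    exact ⟨⟨b.toFinset.erase a, b, P.erase b⟩,
      (mem_iff _ _ _).2 ⟨⟨rfl, hab, hP.nodup b hb, hP.toFinset_subset hb⟩, hP.erase hb⟩,
      insert_erase hb⟩

variable {R : Type*} [CommRing R]

/-- The total weight of all partitions of `S` into linearly ordered blocks, where a partition
weighs the product of the weights `w b` of its blocks. -/
def listPartitionSum (w : List α → R) (S : Finset α) : R :=
  ∑ P ∈ listPartitions S, ∏ b ∈ P, w b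

lemma listPartitionSum_empty (w : List α → R) : listPartitionSum w ∅ = 1 := by
  rw [listPartitionSum, listPartitions_empty, sum_singleton, prod_empty]

lemma listPartitionSum_of_mem (w : List α → R) {S : Finset α} {a : α} (ha : a ∈ S) :
    listPartitionSum w S = ∑ B ∈ (S.erase a).powerset,
      (∑ b ∈ arrangements (insert a B), w b) * listPartitionSum w (S \ insert a B) := by
  rw [listPartitionSum, sum_listPartitions_of_mem ha]
  refine sum_congr rfl fun B _ => ?_
  rw [listPartitionSum, sum_mul_sum]
  refine sum_congr rfl fun b hb => sum_congr rfl fun Q hQ => prod_insert fun hbQ => ?_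
  obtain ⟨-, hbB⟩ := mem_arrangements.1 hb
  rw [← hbB, mem_listPartitions] at hQ
  have hab : a ∈ b := by rw [← List.mem_toFinset, hbB]; exact mem_insert_self a B
  exact hQ.notMem_of_mem_sdiff hbQ hab hab

lemma coeff_succ_mul_of_derivative_eq {c : ℕ → R} {F : R⟦X⟧} (hF : d⁄dX R F = mk c * F) (n : ℕ) :
    coeff (n + 1) F * (n + 1) = ∑ m ∈ range (n + 1), c m * coeff (n - m) F := by
  rw [← coeff_derivative, hF, coeff_mul, Nat.sum_antidiagonal_eq_sum_range_succ_mk]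
  simp only [coeff_mk]

/-- The exponential formula. Since a set of `m + 1` elements carries total block weight
`m! * c m`, the exponential generating function of the blocks has derivative `mk c`, and the
hypothesis on `F` says that `F` is its exponential. -/
theorem listPartitionSum_eq_factorial_mul_coeff {w : List α → R} {c : ℕ → R}
    (hw : ∀ (B : Finset α) (m : ℕ), #B = m + 1 → ∑ b ∈ arrangements B, w b = m ! * c m)
    {F : R⟦X⟧} (hF₀ : coeff 0 F = 1) (hF : d⁄dX R F = mk c * F) (S : Finset α) :
    listPartitionSum w S = (#S)! * coeff #S F := by
  induction S using Finset.strongInduction with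
  | H S ih =>
    rcases S.eq_empty_or_nonempty with rfl | ⟨a, ha⟩
    · simp [listPartitionSum_empty, hF₀]
    obtain ⟨n, hn⟩ : ∃ n, #(S.erase a) = n := ⟨_, rfl⟩
    have hSn : #S = n + 1 := by rw [← hn, card_erase_add_one ha]
    have term_eq : ∀ B ∈ (S.erase a).powerset,
        (∑ b ∈ arrangements (insert a B), w b) * listPartitionSum w (S \ insert a B) =
          (#B)! * c #B * ((n - #B)! * coeff (n - #B) F) := by
      intro B hB
      have hB := mem_powerset.1 hB
      have haB : a ∉ B := fun h => notMem_erase a S (hB h)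
      have hsub : insert a B ⊆ S := insert_subset ha (hB.trans (erase_subset a S))
      have hcard : #(S \ insert a B) = n - #B := by
        rw [card_sdiff_of_subset hsub, card_insert_of_notMem haB, hSn, Nat.add_sub_add_right]
      rw [hw _ _ (card_insert_of_notMem haB),
        ih _ (sdiff_ssubset hsub (insert_nonempty a B)), hcard]
    calc listPartitionSum w S
        = ∑ B ∈ (S.erase a).powerset, (#B)! * c #B * ((n - #B)! * coeff (n - #B) F) := by
          rw [listPartitionSum_of_mem w ha, sum_congr rfl term_eq]
      _ = ∑ m ∈ range (n + 1), n.choose m • (m ! * c m * ((n - m)! * coeff (n - m) F)) := by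
          rw [sum_powerset_apply_card fun m => (m ! : R) * c m * ((n - m)! * coeff (n - m) F), hn]
      _ = n ! * ∑ m ∈ range (n + 1), c m * coeff (n - m) F := by
          rw [mul_sum]
          refine sum_congr rfl fun m hm => ?_
          rw [← Nat.choose_mul_factorial_mul_factorial (mem_range_succ_iff.1 hm), nsmul_eq_mul]
          push_cast
          ring
      _ = (#S)! * coeff #S F := by
          rw [← coeff_succ_mul_of_derivative_eq hF, hSn, Nat.factorial_succ]
          push_cast
          ring

end ListPartitions

section BlockWeights

open PowerSeries
open scoped Nat

lemma sum_pow_card_filter_lt {α R : Type*} [LinearOrder α] [CommSemiring R] (B : Finset α)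
    (z : R) : ∑ a ∈ B, z ^ #{x ∈ B | x < a} = ∑ i ∈ range #B, z ^ i := by
  induction B using Finset.induction_on_max with
  | empty => rfl
  | insert a B hB ih =>
    have ha : a ∉ B := fun h => (hB a h).false
    rw [sum_insert ha, card_insert_of_notMem ha, sum_range_succ, ← ih, add_comm]
    congr 1
    · refine sum_congr rfl fun b hb => ?_
      rw [filter_insert, if_neg (hB b hb).not_gt]
    · rw [filter_insert, if_neg (lt_irrefl a), filter_true_of_mem hB]

lemma blockWeight_cons {B : Finset ℕ} {a : ℕ} {l : List ℕ} (h : a :: l ∈ arrangements B) :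
    blockWeight (a :: l) = #{x ∈ B | x < a} := by
  obtain ⟨hnd, rfl⟩ := mem_arrangements.1 h
  rw [blockWeight, List.headI_cons, ← List.toFinset_card_of_nodup (hnd.filter _),
    List.toFinset_filter]
  simp only [decide_eq_true_eq]

variable {R : Type*} [CommRing R]

lemma sum_arrangements_pow_blockWeight {B : Finset ℕ} {m : ℕ} (hB : #B = m + 1) (z : R) :
    ∑ b ∈ arrangements B, z ^ blockWeight b = m ! * ∑ i ∈ range (m + 1), z ^ i := by
  have hB' : B.Nonempty := card_pos.1 (hB ▸ m.succ_pos)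
  rw [sum_arrangements_eq_sum_cons hB', ← hB, ← sum_pow_card_filter_lt, mul_sum]
  refine sum_congr rfl fun a ha => ?_
  have hcard : #(arrangements (B.erase a)) = m ! := by
    rw [card_arrangements, card_erase_of_mem ha, hB, Nat.add_sub_cancel]
  rw [sum_congr rfl fun l hl => by rw [blockWeight_cons (cons_mem_arrangements.2 ⟨ha, hl⟩)],
    sum_const, hcard, nsmul_eq_mul]

lemma mk_pow_mul_one_sub_C_mul_X (a : R) : mk (a ^ ·) * (1 - C a * X) = 1 := by
  simpa [rescale_mk, rescale_X] using congrArg (rescale a) (mk_one_mul_one_sub_eq_one R)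

variable [BinomialRing R]

/-- The power series `(1 - a X) ^ r`. -/
def oneSubCMulXPow (a r : R) : R⟦X⟧ := rescale (-a) (binomialSeries R r)

lemma coeff_oneSubCMulXPow (a r : R) (n : ℕ) :
    coeff n (oneSubCMulXPow a r) = (-a) ^ n * Ring.choose r n := by
  rw [oneSubCMulXPow, coeff_rescale, binomialSeries_coeff, smul_eq_mul, mul_one]

lemma coeff_oneSubCMulXPow_one_neg (r : R) (n : ℕ) :
    coeff n (oneSubCMulXPow 1 (-r)) = Ring.choose (r + n - 1) n := by
  rw [coeff_oneSubCMulXPow, Ring.choose_neg, Units.smul_def, zsmul_eq_mul,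
    Int.cast_negOnePow_natCast, ← mul_assoc, ← mul_pow, neg_one_mul, neg_neg, one_pow, one_mul]

lemma succ_mul_ringChoose_succ (r : R) (n : ℕ) :
    (n + 1) * Ring.choose r (n + 1) = Ring.choose r n * (r - n) := by
  have := Ring.choose_smul_choose r (n.le_add_right 1)
  rwa [Nat.choose_succ_self_right, Nat.add_sub_cancel_left, Ring.choose_one_right, nsmul_eq_mul,
    Nat.cast_succ] at this

lemma derivative_oneSubCMulXPow (a r : R) :
    d⁄dX R (oneSubCMulXPow a r) = -(C (a * r) * mk (a ^ ·) * oneSubCMulXPow a r) := by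
  have ode : (1 - C a * X) * d⁄dX R (oneSubCMulXPow a r) = -(C (a * r) * oneSubCMulXPow a r) := by
    ext n
    rw [sub_mul, one_mul, map_sub, map_neg, mul_assoc, coeff_C_mul, coeff_C_mul]
    rcases n with _ | n
    · simp [coeff_derivative, coeff_oneSubCMulXPow]
    · rw [coeff_succ_X_mul, coeff_derivative, coeff_derivative]
      simp only [coeff_oneSubCMulXPow, pow_succ]
      have := succ_mul_ringChoose_succ r (n + 1)
      push_cast at this ⊢
      linear_combination (-a) ^ n * a ^ 2 * this
  linear_combination mk (a ^ ·) * ode -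
    d⁄dX R (oneSubCMulXPow a r) * mk_pow_mul_one_sub_C_mul_X a

lemma listPartitionSum_mul_pow_blockWeight (y z : R) (S : Finset ℕ) :
    listPartitionSum (fun b => y * (1 - z) * z ^ blockWeight b) S =
      (#S)! * coeff #S (oneSubCMulXPow z y * oneSubCMulXPow 1 (-y)) := by
  refine listPartitionSum_eq_factorial_mul_coeff (c := fun m => y * (1 - z ^ (m + 1))) ?_ ?_ ?_ S
  · intro B m hB
    rw [← mul_sum, sum_arrangements_pow_blockWeight hB, ← mul_neg_geom_sum]
    ring
  · simp [coeff_mul, coeff_oneSubCMulXPow]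
  · have mk_c : mk (fun m => y * (1 - z ^ (m + 1))) = C y * (mk (1 ^ ·) - C z * mk (z ^ ·)) := by
      ext m
      simp [pow_succ']
    rw [mk_c, Derivation.leibniz, smul_eq_mul, smul_eq_mul, derivative_oneSubCMulXPow,
      derivative_oneSubCMulXPow]
    simp only [map_mul, map_neg, map_one]
    ring

lemma factorial_mul_ringChoose_mul_ringChoose (r : R) {i j N : ℕ} (h : i + j = N + 1) :
    (N + 1)! * (Ring.choose r i * Ring.choose (r + j - 1) j) =
      (N + 1).choose i * N ! * r * Ring.choose (r + N - i) N := by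
  rcases j with _ | j
  · obtain rfl : i = N + 1 := h
    have := Ring.choose_smul_choose r (Nat.le_add_left 1 N)
    rw [Nat.choose_one_right, Ring.choose_one_right, Nat.add_sub_cancel, nsmul_eq_mul,
      Nat.cast_one] at this
    rw [Ring.choose_zero_right, Nat.choose_self, Nat.factorial_succ,
      show r + N - (N + 1 : ℕ) = r - 1 by push_cast; ring]
    push_cast at this ⊢
    linear_combination (N ! : R) * this
  · obtain rfl : N = i + j := (Nat.succ.inj h).symm
    have absorb := succ_mul_ringChoose_succ (r + j) j
    have split := Ring.choose_smul_choose (r + j) (Nat.le_add_left j i)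
    rw [nsmul_eq_mul, Nat.add_sub_cancel, add_sub_cancel_right] at split
    rw [add_sub_cancel_right] at absorb
    rw [show r + (j + 1 : ℕ) - 1 = r + j by push_cast; ring,
      show r + (i + j : ℕ) - i = r + j by push_cast; ring,
      ← Nat.choose_mul_factorial_mul_factorial (h ▸ Nat.le_add_right i (j + 1)),
      ← h, Nat.add_sub_cancel_left, ← Nat.choose_mul_factorial_mul_factorial (Nat.le_add_left j i),
      Nat.add_sub_cancel, Nat.factorial_succ]
    push_cast
    linear_combination ((i + (j + 1)).choose i * i ! * j ! : R) *
      (Ring.choose r i * absorb - r * split)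

lemma listPartitionSum_mul_pow_blockWeight_of_card (y z : R) {S : Finset ℕ} {N : ℕ}
    (hS : #S = N + 1) :
    listPartitionSum (fun b => y * (1 - z) * z ^ blockWeight b) S =
      y * (N ! * ∑ i ∈ range (N + 2),
        (-z) ^ i * (N + 1).choose i * Ring.choose (y + N - i) N) := by
  rw [listPartitionSum_mul_pow_blockWeight, hS, coeff_mul,
    Nat.sum_antidiagonal_eq_sum_range_succ_mk, mul_sum, mul_sum, mul_sum]
  refine sum_congr rfl fun i hi => ?_
  have hij : i + (N + 1 - i) = N + 1 := Nat.add_sub_cancel' (mem_range_succ_iff.1 hi)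
  rw [coeff_oneSubCMulXPow, coeff_oneSubCMulXPow_one_neg]
  linear_combination (-z) ^ i * factorial_mul_ringChoose_mul_ringChoose y hij

end BlockWeights

section WeightedLahSeries

open PowerSeries
open scoped Nat

lemma isListPartition_Icc_iff {n : ℕ} {P : Finset (List ℕ)} :
    IsListPartition (Icc 1 n) P ↔ IsOrderedPartition n P := by
  constructor
  · intro h
    exact ⟨fun b hb => ⟨h.ne_nil b hb, h.nodup b hb⟩,
      fun _ hb₁ _ hb₂ hne _ hx₁ hx₂ => h.disjoint hb₁ hb₂ hne hx₁ hx₂, h.mem_iff⟩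
  · rintro ⟨hb, hdisj, hmem⟩
    exact ⟨fun b h => (hb b h).1, fun b h => (hb b h).2,
      fun b₁ h₁ b₂ h₂ hne x hx₁ hx₂ => hdisj b₁ h₁ b₂ h₂ hne x hx₁ hx₂, hmem⟩

lemma weightedLah_eq_card (ℓ n m : ℕ) : weightedLah ℓ n m =
    #{P ∈ listPartitions (Icc 1 n) | #P = m ∧ partitionWeight P = ℓ} := by
  rw [weightedLah, ← Set.ncard_coe_finset]
  congr 1
  ext P
  simp only [Set.mem_ofPred_eq, coe_filter, mem_listPartitions, isListPartition_Icc_iff,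
    Nat.cast_inj]

/-- The generating function `∑ W(ℓ,n,m) X ^ ℓ` of the weighted Lah numbers. -/
def weightedLahSeries (n m : ℕ) : ℚ⟦X⟧ := mk fun ℓ => (weightedLah ℓ n m : ℚ)

lemma weightedLahSeries_eq_sum (n m : ℕ) : weightedLahSeries n m =
    ∑ P ∈ listPartitions (Icc 1 n) with #P = m, X ^ partitionWeight P := by
  ext ℓ
  rw [weightedLahSeries, coeff_mk, weightedLah_eq_card, ← filter_filter, ← sum_boole, map_sum]
  simp only [coeff_X_pow, eq_comm]

lemma coeff_listPartitionSum_X_mul (n m : ℕ) :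
    (listPartitionSum (fun b => Polynomial.X * (1 - Polynomial.C X) *
      Polynomial.C (X : ℚ⟦X⟧) ^ blockWeight b) (Icc 1 n)).coeff m =
      (1 - X) ^ m * weightedLahSeries n m := by
  have prod_eq (P : Finset (List ℕ)) : ∏ b ∈ P, (Polynomial.X * (1 - Polynomial.C X) *
      Polynomial.C (X : ℚ⟦X⟧) ^ blockWeight b) =
      Polynomial.C ((1 - X) ^ #P * X ^ partitionWeight P) * Polynomial.X ^ #P := by
    rw [prod_mul_distrib, prod_const, prod_pow_eq_pow_sum, partitionWeight]
    simp only [map_mul, map_pow, map_sub, map_one, mul_pow]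
    ring
  rw [weightedLahSeries_eq_sum, mul_sum, sum_filter, listPartitionSum, Polynomial.finsetSum_coeff]
  refine sum_congr rfl fun P _ => ?_
  rw [prod_eq, Polynomial.coeff_C_mul_X_pow]
  split_ifs with h h' h'
  · rw [h]
  · exact absurd h.symm h'
  · exact absurd h'.symm h
  · rfl

/-- The polynomial `binomial(x + N - j, N)` in `x`. -/
def shiftedChoose (N j : ℕ) : Polynomial ℚ :=
  Ring.choose (Polynomial.X + Polynomial.C (N - j : ℚ)) N

lemma map_shiftedChoose {A : Type*} [CommRing A] [BinomialRing (Polynomial A)] (f : ℚ →+* A)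
    (N j : ℕ) : (shiftedChoose N j).map f =
      Ring.choose (Polynomial.X + (N : Polynomial A) - (j : Polynomial A)) N := by
  rw [← Polynomial.coe_mapRingHom, shiftedChoose, Ring.map_choose]
  congr 1
  simp only [map_add, map_sub, Polynomial.coe_mapRingHom, Polynomial.map_X, map_natCast]
  ring

theorem one_sub_X_pow_mul_weightedLahSeries (N m : ℕ) :
    (1 - X) ^ (m + 1) * weightedLahSeries (N + 1) (m + 1) =
      C (N ! : ℚ) * PowerSeries.mk fun j =>
        (-1) ^ j * (N + 1).choose j * (shiftedChoose N j).coeff m := by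
  have hcard : #(Icc 1 (N + 1)) = N + 1 := Nat.card_Icc 1 (N + 1)
  have term_eq (i : ℕ) : (-Polynomial.C (X : ℚ⟦X⟧)) ^ i * ((N + 1).choose i : Polynomial ℚ⟦X⟧) *
      Ring.choose (Polynomial.X + (N : Polynomial ℚ⟦X⟧) - (i : Polynomial ℚ⟦X⟧)) N =
      Polynomial.C (C ((-1 : ℚ) ^ i * (N + 1).choose i) * X ^ i) * (shiftedChoose N i).map C := by
    rw [map_shiftedChoose, neg_pow]
    simp only [map_mul, map_pow, map_neg, map_one, map_natCast]
    ring
  rw [← coeff_listPartitionSum_X_mul, listPartitionSum_mul_pow_blockWeight_of_card _ _ hcard,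
    Polynomial.coeff_X_mul, ← map_natCast Polynomial.C, Polynomial.coeff_C_mul,
    ← map_natCast (C : ℚ →+* ℚ⟦X⟧)]
  congr 1
  simp only [term_eq, Polynomial.finsetSum_coeff, Polynomial.coeff_C_mul, Polynomial.coeff_map]
  ext j
  simp only [map_sum, mul_right_comm _ (X ^ _), ← map_mul, coeff_C_mul_X_pow, coeff_mk]
  rw [sum_ite_eq, ite_eq_left_iff, mem_range, not_lt]
  intro hj
  rw [Nat.choose_eq_zero_of_lt hj, Nat.cast_zero, mul_zero, zero_mul]

end WeightedLahSeries

section Worpitzky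

open PowerSeries

lemma card_orderEmbedding_fin (m n : ℕ) : Nat.card (Fin m ↪o Fin n) = n.choose m := by
  rw [Nat.card_congr (Set.powersetCard.ofFinEmbEquiv (n := m) (I := Fin n)), Set.powersetCard.card,
    Nat.card_fin]

lemma card_strictMono_add {M c : ℕ} {s : Fin (M + 1) → ℕ} (hs₀ : s 0 = 0)
    (hs : ∀ i : Fin M, s i.castSucc ≤ s i.succ ∧ s i.succ ≤ s i.castSucc + 1) :
    Nat.card {g : Fin (M + 1) → Fin c // StrictMono fun i => (g i : ℕ) + s i} =
      (c + s (Fin.last M)).choose (M + 1) := by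
  have hs_mono : Monotone s := Fin.monotone_iff_le_succ.2 fun i => (hs i).1
  have sub_mono (h : Fin (M + 1) ↪o Fin (c + s (Fin.last M))) :
      Monotone fun i => ((h i : ℕ) : ℤ) - s i := by
    refine Fin.monotone_iff_le_succ.2 fun i => ?_
    have h_lt : (h i.castSucc : ℕ) < h i.succ := h.strictMono Fin.castSucc_lt_succ
    have := hs i
    omega
  have le_and_lt (h : Fin (M + 1) ↪o Fin (c + s (Fin.last M))) (i : Fin (M + 1)) :
      s i ≤ h i ∧ (h i : ℕ) - s i < c := by
    have h_zero := sub_mono h (Fin.zero_le i)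
    have h_last := sub_mono h (Fin.le_last i)
    have := (h (Fin.last M)).isLt
    simp only [hs₀] at h_zero h_last
    omega
  rw [← card_orderEmbedding_fin]
  refine Nat.card_eq_of_bijective (fun g => OrderEmbedding.ofStrictMono
    (fun i => ⟨g.1 i + s i, Nat.add_lt_add_of_lt_of_le (g.1 i).isLt (hs_mono (Fin.le_last i))⟩)
    g.2) ⟨?_, ?_⟩
  · intro g g' h
    ext i
    have := congrArg Fin.val (DFunLike.congr_fun h i)
    exact Nat.add_right_cancel this
  · intro h
    have add_sub (i) : (h i : ℕ) - s i + s i = h i := Nat.sub_add_cancel (le_and_lt h i).1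
    refine ⟨⟨fun i => ⟨h i - s i, (le_and_lt h i).2⟩, ?_⟩, ?_⟩
    · simp only [add_sub]
      exact h.strictMono
    · ext i
      exact add_sub i

variable {M : ℕ} (σ : Equiv.Perm (Fin (M + 1)))

/-- The number of ascents of `σ` at positions before `i`. -/
def ascentsBefore (i : Fin (M + 1)) : ℕ := #{j : Fin M | j.castSucc < i ∧ σ j.castSucc < σ j.succ}

lemma ascentsBefore_zero : ascentsBefore σ 0 = 0 :=
  card_eq_zero.2 (filter_eq_empty_iff.2 fun _ _ h => Fin.not_lt_zero _ h.1)

lemma ascentsBefore_succ (i : Fin M) : ascentsBefore σ i.succ =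
    ascentsBefore σ i.castSucc + if σ i.castSucc < σ i.succ then 1 else 0 := by
  have split : ({j : Fin M | j.castSucc < i.succ ∧ σ j.castSucc < σ j.succ} : Finset (Fin M)) =
      ({j : Fin M | j.castSucc < i.castSucc ∧ σ j.castSucc < σ j.succ} : Finset (Fin M)) ∪
        {j ∈ ({i} : Finset (Fin M)) | σ j.castSucc < σ j.succ} := by
    ext j
    simp only [Fin.castSucc_lt_succ_iff, Fin.castSucc_lt_castSucc_iff, le_iff_lt_or_eq, mem_union,
      mem_filter, mem_univ, mem_singleton]
    tauto
  rw [ascentsBefore, split, card_union_of_disjoint, ascentsBefore, filter_singleton]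
  · split_ifs <;> rfl
  · refine disjoint_left.2 fun j hj hj' => ?_
    rw [mem_singleton.1 (mem_filter.1 hj').1] at hj
    exact (mem_filter.1 hj).2.1.false

lemma descentCount_eq_card :
    descentCount (M + 1) σ = #{j : Fin M | σ j.succ < σ j.castSucc} := by
  rw [descentCount, card_filter, Nat.add_sub_cancel, sum_range, card_filter]
  refine sum_congr rfl fun i _ => ?_
  have hi : (i : ℕ) < M := i.isLt
  simp only [List.getD_eq_getElem?_getD, List.getElem?_ofFn, Nat.succ_lt_succ hi,
    Nat.lt_succ_of_lt hi, dif_pos, Option.getD_some, Fin.lt_def]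
  rfl

lemma ascentsBefore_last_add_descentCount :
    ascentsBefore σ (Fin.last M) + descentCount (M + 1) σ = M := by
  have hdesc (j : Fin M) : σ j.succ < σ j.castSucc ↔
      ¬ (j.castSucc < Fin.last M ∧ σ j.castSucc < σ j.succ) := by
    have hne : σ j.succ ≠ σ j.castSucc := σ.injective.ne Fin.castSucc_lt_succ.ne'
    rw [not_and, not_lt, hne.le_iff_lt]
    exact (imp_iff_right (Fin.castSucc_lt_last j)).symm
  simp only [descentCount_eq_card, hdesc]
  rw [ascentsBefore, card_filter_add_card_filter_not, card_univ, Fintype.card_fin]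

lemma sort_eq_iff_strictMono_add_ascentsBefore {c : ℕ} (f : Fin (M + 1) → Fin c) :
    Tuple.sort f = σ ↔ StrictMono fun i => (f (σ i) : ℕ) + ascentsBefore σ i := by
  rw [eq_comm, Tuple.eq_sort_iff', Fin.strictMono_iff_lt_succ, Fin.strictMono_iff_lt_succ]
  refine forall_congr' fun i => ?_
  have : (σ i.succ : ℕ) ≠ σ i.castSucc :=
    Fin.val_ne_of_ne (σ.injective.ne Fin.castSucc_lt_succ.ne')
  have lex_lt : (σ.trans (Tuple.graphEquiv₁ f)) i.castSucc < (σ.trans (Tuple.graphEquiv₁ f)) i.succ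
      ↔ f (σ i.castSucc) < f (σ i.succ) ∨
        f (σ i.castSucc) = f (σ i.succ) ∧ σ i.castSucc < σ i.succ := Prod.Lex.toLex_lt_toLex
  rw [lex_lt, ascentsBefore_succ]
  simp only [Fin.lt_def, Fin.ext_iff]
  split_ifs <;> omega

lemma card_sort_eq (c : ℕ) : Nat.card {f : Fin (M + 1) → Fin c // Tuple.sort f = σ} =
    (c + (M - descentCount (M + 1) σ)).choose (M + 1) := by
  have hlast : M - descentCount (M + 1) σ = ascentsBefore σ (Fin.last M) :=
    (Nat.eq_sub_of_add_eq (ascentsBefore_last_add_descentCount σ)).symm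
  rw [hlast, ← card_strictMono_add (ascentsBefore_zero σ) fun i => by
    rw [ascentsBefore_succ]; split_ifs <;> omega]
  exact Nat.card_congr ((Equiv.arrowCongr σ.symm (Equiv.refl _)).subtypeEquiv
    (sort_eq_iff_strictMono_add_ascentsBefore σ))

theorem pow_eq_sum_choose_descentCount (M c : ℕ) : c ^ (M + 1) =
    ∑ σ : Equiv.Perm (Fin (M + 1)), (c + (M - descentCount (M + 1) σ)).choose (M + 1) := by
  calc c ^ (M + 1) = #(univ : Finset (Fin (M + 1) → Fin c)) := by simp
    _ = ∑ σ, #{f : Fin (M + 1) → Fin c | Tuple.sort f = σ} :=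
      card_eq_sum_card_fiberwise fun _ _ => mem_coe.2 (mem_univ _)
    _ = _ := by
      refine sum_congr rfl fun σ _ => ?_
      rw [← card_sort_eq, Nat.card_eq_fintype_card, Fintype.card_subtype]

/-- The generating function `∑ A(m,j) X ^ j` of the Eulerian numbers. -/
def eulerianSeries (m : ℕ) : ℚ⟦X⟧ := mk fun j => (eulerian m j : ℚ)

lemma eulerianSeries_eq_sum (m : ℕ) :
    eulerianSeries m = ∑ σ : Equiv.Perm (Fin m), X ^ descentCount m σ := by
  ext j
  rw [eulerianSeries, coeff_mk, eulerian, Nat.card_eq_fintype_card, Fintype.card_subtype,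
    ← sum_boole, map_sum]
  simp only [coeff_X_pow, eq_comm]

theorem mk_pow_mul_one_sub_X_pow (M : ℕ) :
    (PowerSeries.mk fun c => (c : ℚ) ^ (M + 1)) * (1 - X) ^ (M + 2) =
      X * eulerianSeries (M + 1) := by
  have mk_pow : (PowerSeries.mk fun c => (c : ℚ) ^ (M + 1)) = X * eulerianSeries (M + 1) *
      PowerSeries.mk fun n => ((M + 1 + n).choose (M + 1) : ℚ) := by
    ext c
    rw [eulerianSeries_eq_sum, mul_sum, sum_mul, map_sum, coeff_mk, ← Nat.cast_pow,
      pow_eq_sum_choose_descentCount, Nat.cast_sum]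
    refine sum_congr rfl fun σ _ => ?_
    have hσ := ascentsBefore_last_add_descentCount σ
    rw [← pow_succ', coeff_X_pow_mul']
    split_ifs with hc
    · rw [coeff_mk]
      congr 2
      omega
    · rw [Nat.choose_eq_zero_of_lt (by omega), Nat.cast_zero]
  rw [mk_pow, mul_assoc, mk_add_choose_mul_one_sub_pow_eq_one, mul_one]

end Worpitzky

section LatticePoints

open PowerSeries

lemma mem_smul_hyperSimplex_iff {k n : ℕ} (hkn : k ≤ n) {t : ℝ} (ht : 0 ≤ t) {x : Fin n → ℝ} :
    x ∈ t • hyperSimplex k n ↔ (∀ i, 0 ≤ x i ∧ x i ≤ t) ∧ ∑ i, x i = k * t := by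
  rcases ht.eq_or_lt with rfl | ht
  · have hne : (hyperSimplex k n).Nonempty := by
      refine ⟨fun i => if (i : ℕ) < k then 1 else 0, fun i => ?_, ?_⟩
      · dsimp only
        split_ifs <;> norm_num
      · rw [sum_boole, Fin.card_filter_val_lt, min_eq_right hkn]
    rw [Set.zero_smul_set hne, Set.mem_zero, mul_zero]
    constructor
    · rintro rfl
      simp
    · rintro ⟨hx, -⟩
      exact funext fun i => le_antisymm (hx i).2 (hx i).1
  · rw [Set.mem_smul_set_iff_inv_smul_mem₀ ht.ne']
    simp only [hyperSimplex, Set.mem_ofPred_eq, Pi.smul_apply, smul_eq_mul, ← mul_sum]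
    refine and_congr (forall_congr' fun i => and_congr ?_ ?_) ?_
    · exact mul_nonneg_iff_of_pos_left (inv_pos.2 ht)
    · rw [inv_mul_le_iff₀ ht, mul_one]
    · rw [inv_mul_eq_iff_eq_mul₀ ht.ne', mul_comm]

lemma latticeCount_smul_hyperSimplex {k n : ℕ} (hkn : k ≤ n) (t : ℕ) :
    latticeCount ((t : ℝ) • hyperSimplex k n) = hyperCount k n t := by
  refine Nat.card_congr (Equiv.subtypeEquivRight fun x => ?_)
  rw [mem_smul_hyperSimplex_iff hkn t.cast_nonneg]
  exact_mod_cast Iff.rfl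

lemma hyperCount_eq_card (k n t : ℕ) : hyperCount k n t =
    #{x ∈ Fintype.piFinset fun _ : Fin n => range (t + 1) | ∑ i, x i = k * t} := by
  have mem_iff (x : Fin n → ℕ) :
      x ∈ ({x ∈ Fintype.piFinset fun _ : Fin n => range (t + 1) | ∑ i, x i = k * t} : Finset _) ↔
        (∀ i, 0 ≤ (x i : ℤ) ∧ (x i : ℤ) ≤ t) ∧ ∑ i, (x i : ℤ) = (k : ℤ) * t := by
    simp only [mem_filter, Fintype.mem_piFinset, mem_range_succ_iff, Nat.cast_nonneg, true_and,
      Nat.cast_le]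
    exact_mod_cast Iff.rfl
  rw [← Nat.card_eq_finsetCard]
  refine (Nat.card_eq_of_bijective
    (fun x => ⟨fun i => (x.1 i : ℤ), (mem_iff x.1).1 x.2⟩) ⟨?_, ?_⟩).symm
  · intro x y hxy
    ext i
    exact Nat.cast_injective (R := ℤ) (congrFun (congrArg Subtype.val hxy) i)
  · rintro ⟨x, hx, hsum⟩
    lift x to Fin n → ℕ using fun i => (hx i).1
    exact ⟨⟨x, (mem_iff x).2 ⟨hx, hsum⟩⟩, rfl⟩

lemma hyperCount_eq_coeff (k n t : ℕ) :
    (hyperCount k n t : ℚ) = coeff (k * t) ((∑ i ∈ range (t + 1), (X : ℚ⟦X⟧) ^ i) ^ n) := by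
  rw [hyperCount_eq_card, ← sum_boole, ← Fin.prod_const, prod_univ_sum, map_sum]
  simp only [prod_pow_eq_pow_sum, coeff_X_pow, eq_comm]

lemma geom_sum_X_pow_succ_eq (N t : ℕ) : (∑ i ∈ range (t + 1), (X : ℚ⟦X⟧) ^ i) ^ (N + 1) =
    (∑ j ∈ range (N + 2), C ((-1) ^ j * (N + 1).choose j : ℚ) * X ^ ((t + 1) * j)) *
      PowerSeries.mk fun m => ((N + m).choose N : ℚ) := by
  have geom_sum : ∑ i ∈ range (t + 1), (X : ℚ⟦X⟧) ^ i =
      (1 - X ^ (t + 1)) * PowerSeries.mk 1 := by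
    linear_combination PowerSeries.mk 1 * mul_neg_geom_sum (X : ℚ⟦X⟧) (t + 1) -
      (∑ i ∈ range (t + 1), (X : ℚ⟦X⟧) ^ i) * mk_one_mul_one_sub_eq_one ℚ
  rw [geom_sum, mul_pow, mk_one_pow_eq_mk_choose_add, sub_eq_neg_add, add_pow]
  congr 1
  refine sum_congr rfl fun j _ => ?_
  rw [neg_pow, ← pow_mul]
  simp only [one_pow, mul_one, map_mul, map_pow, map_neg, map_one, map_natCast]
  ring

lemma hyperCount_eq_sum (k N t : ℕ) : (hyperCount k (N + 1) t : ℚ) =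
    ∑ j ∈ range (N + 2), (-1) ^ j * (N + 1).choose j *
      if (t + 1) * j ≤ k * t then ((N + (k * t - (t + 1) * j)).choose N : ℚ) else 0 := by
  rw [hyperCount_eq_coeff, geom_sum_X_pow_succ_eq, sum_mul, map_sum]
  refine sum_congr rfl fun j _ => ?_
  rw [mul_assoc, coeff_C_mul, coeff_X_pow_mul', coeff_mk]

end LatticePoints

section EhrhartPolynomial

open PowerSeries
open scoped Nat

/-- The Ehrhart polynomial `∑ j < k, (-1) ^ j * binomial(N + 1, j) * binomial((k - j) t + N - j, N)`
of the hypersimplex `Δ_{k,N+1}`. -/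
def ehrhartPoly (k N : ℕ) : Polynomial ℚ :=
  ∑ j ∈ range k, Polynomial.C ((-1) ^ j * (N + 1).choose j : ℚ) *
    (shiftedChoose N j).comp (Polynomial.C (k - j : ℚ) * Polynomial.X)

lemma eval_shiftedChoose {N j : ℕ} (hj : j ≤ N) (a : ℕ) :
    (shiftedChoose N j).eval (a : ℚ) = (a + (N - j)).choose N := by
  rw [← Polynomial.coe_evalRingHom, shiftedChoose, Ring.map_choose, ← Ring.choose_natCast]
  congr 1
  push_cast [hj]
  simp

lemma hyperCount_eq_eval_ehrhartPoly {k N : ℕ} (hk : 1 ≤ k) (hkN : k ≤ N + 1) (t : ℕ) :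
    (hyperCount k (N + 1) t : ℚ) = (ehrhartPoly k N).eval (t : ℚ) := by
  have hsub : range k ⊆ range (N + 2) := range_subset_range.2 (hkN.trans (N + 1).le_succ)
  rw [hyperCount_eq_sum, ehrhartPoly, Polynomial.eval_finsetSum, ← sum_subset hsub]
  · refine sum_congr rfl fun j hj => ?_
    obtain ⟨d, rfl⟩ := Nat.exists_eq_add_of_lt (mem_range.1 hj)
    have hjN : j ≤ N := by omega
    have h_arg : ((j + d + 1 : ℕ) - j : ℚ) * t = ((d + 1) * t : ℕ) := by
      push_cast
      ring
    simp only [Polynomial.eval_mul, Polynomial.eval_C, Polynomial.eval_comp, Polynomial.eval_X]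
    rw [h_arg, eval_shiftedChoose hjN]
    congr 1
    have h_diff : (j + d + 1) * t + j = (t + 1) * j + (d + 1) * t := by ring
    split_ifs with h
    · congr 2
      omega
    · rw [Nat.choose_eq_zero_of_lt (by omega), Nat.cast_zero]
  · intro j _ hj
    have hkj : k ≤ j := not_lt.1 (mt mem_range.2 hj)
    rw [if_neg (by nlinarith), mul_zero]

lemma coeff_ehrhartPoly (k N m : ℕ) : (ehrhartPoly k N).coeff m =
    ∑ j ∈ range k, (-1) ^ j * (N + 1).choose j * (shiftedChoose N j).coeff m * (k - j : ℚ) ^ m := by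
  simp only [ehrhartPoly, Polynomial.finsetSum_coeff, Polynomial.coeff_C_mul,
    Polynomial.comp_C_mul_X_coeff, mul_assoc]

lemma weightedLahSeries_mul_eulerianSeries (N m : ℕ) :
    weightedLahSeries (N + 1) (m + 2) * (X * eulerianSeries (m + 1)) =
      C (N ! : ℚ) * ((PowerSeries.mk fun j =>
        (-1) ^ j * (N + 1).choose j * (shiftedChoose N j).coeff (m + 1)) *
          PowerSeries.mk fun c => (c : ℚ) ^ (m + 1)) := by
  linear_combination (PowerSeries.mk fun c => (c : ℚ) ^ (m + 1)) *
    one_sub_X_pow_mul_weightedLahSeries N (m + 1) -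
    weightedLahSeries (N + 1) (m + 2) * mk_pow_mul_one_sub_X_pow m

theorem sum_weightedLah_mul_eulerian (k N m : ℕ) :
    ∑ ℓ ∈ range k, (weightedLah ℓ (N + 1) (m + 2) : ℚ) * eulerian (m + 1) (k - ℓ - 1) =
      N ! * (ehrhartPoly k N).coeff (m + 1) := by
  have coeff_eq := congrArg (coeff k) (weightedLahSeries_mul_eulerianSeries N m)
  rw [coeff_C_mul, coeff_mul, coeff_mul, Nat.sum_antidiagonal_eq_sum_range_succ_mk,
    Nat.sum_antidiagonal_eq_sum_range_succ_mk, sum_range_succ, sum_range_succ, Nat.sub_self,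
    coeff_zero_X_mul, coeff_mk k, coeff_mk 0, Nat.cast_zero, zero_pow m.succ_ne_zero, mul_zero,
    mul_zero, add_zero, add_zero] at coeff_eq
  rw [coeff_ehrhartPoly]
  convert coeff_eq using 1
  · refine sum_congr rfl fun ℓ hℓ => ?_
    obtain ⟨d, rfl⟩ := Nat.exists_eq_add_of_lt (mem_range.1 hℓ)
    have hd : ℓ + d + 1 - ℓ = d + 1 := by omega
    rw [hd, coeff_succ_X_mul, weightedLahSeries, eulerianSeries, coeff_mk, coeff_mk,
      Nat.add_sub_cancel]
  · congr 1
    refine sum_congr rfl fun j hj => ?_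
    rw [coeff_mk, coeff_mk, Nat.cast_sub (mem_range.1 hj).le]

lemma coeff_succ_ehrhartPoly (k N m : ℕ) :
    (ehrhartPoly k N).coeff (m + 1) = eCoef k (N + 1) (m + 1) := by
  have hN : (N ! : ℚ) ≠ 0 := Nat.cast_ne_zero.2 N.factorial_ne_zero
  rw [eCoef, Nat.add_sub_cancel, sum_weightedLah_mul_eulerian, one_div, inv_mul_cancel_left₀ hN]

end EhrhartPolynomial

theorem hypersimplex_ehrhart (k n : ℕ) (hk : 1 ≤ k) (hkn : k ≤ n - 1) :
    (∀ t : ℕ, latticeCount ((t : ℝ) • hyperSimplex k n) = hyperCount k n t) ∧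
      ∃ p : Polynomial ℚ, (∀ t : ℕ, (hyperCount k n t : ℚ) = p.eval (t : ℚ)) ∧
        ∀ m, 1 ≤ m → m ≤ n - 1 → p.coeff m = eCoef k n m := by
  obtain ⟨N, rfl⟩ : ∃ N, n = N + 1 := ⟨n - 1, by omega⟩
  have hkN : k ≤ N + 1 := hkn.trans N.le_succ
  refine ⟨latticeCount_smul_hyperSimplex hkN, ehrhartPoly k N,
    hyperCount_eq_eval_ehrhartPoly hk hkN, fun m hm _ => ?_⟩
  obtain ⟨m, rfl⟩ := Nat.exists_eq_add_of_le' hm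
  exact coeff_succ_ehrhartPoly k N m
end
end

section
/- For 1 < k ≤ n−1, the Ehrhart counting function t ↦ #(tΔ'_{k,n} ∩ ℤ^{n-1}) of the half-open hypersimplex is a polynomial in t of degree n−1 with all coefficients of t^m positive for 1 ≤ m ≤ n−1 and constant term 0. -/
noncomputable section

open Finset

/-!
By inclusion-exclusion over the box, the number of points of `{0, …, t} ^ d` with coordinate sum at
most `k * t` is `∑ j, (-1) ^ j * C(d, j) * C((k - j) * t - j + d, d)`. Since
`C(d, j) * C(y - j + d, d) = C(y, j) * C(y + d - j, d - j)`, its coefficient of `t ^ m` is the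
coefficient of `q ^ k` in `(∑ u, u ^ m * q ^ u) * [y ^ m] B_d`, where
`∑ d, B_d(y) * z ^ d = (1 - q * z) ^ y * (1 - z) ^ (-y - 1)`. The logarithmic derivative of this
series in `z` is `∑ p, (1 + y * (1 - q) * [p + 1]_q) * z ^ p`, so `B_d(y) = R_d(y * (1 - q))` for a
polynomial `R_d` with nonnegative coefficients. Passing to the slab between `k * t` and
`(k + 1) * t` supplies one more factor `1 - q`, and `(1 - q) ^ (m + 1) * ∑ u, u ^ m * q ^ u` is the
Eulerian polynomial `A_m`. So the coefficient for the slab is that of `q ^ (k + 1)` in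
`A_m * [w ^ m] R_d`, a product of polynomials with nonnegative coefficients, which are positive in
degrees `1, …, m` and `0, …, d - m` respectively.
-/

section Eulerian

open Polynomial

/-- The Eulerian polynomial `A_m`, normalised by `∑ u, u ^ m * X ^ u = A_m / (1 - X) ^ (m + 1)`, so
that `A_0 = 1` and `X ∣ A_m` for `0 < m`. -/
def eulerianPoly : ℕ → ℚ[X]
  | 0 => 1
  | m + 1 => X * ((1 - X) * derivative (eulerianPoly m) + C ((m : ℚ) + 1) * eulerianPoly m)

theorem coeff_eulerianPoly_succ_succ (m i : ℕ) :
    (eulerianPoly (m + 1)).coeff (i + 1) =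
      (i + 1) * (eulerianPoly m).coeff (i + 1) + (m + 1 - i) * (eulerianPoly m).coeff i := by
  have hX : (X * derivative (eulerianPoly m)).coeff i = i * (eulerianPoly m).coeff i := by
    cases i with
    | zero => simp
    | succ i => rw [coeff_X_mul, coeff_derivative]; push_cast; ring
  rw [eulerianPoly, coeff_X_mul, coeff_add, sub_mul, one_mul, coeff_sub, hX, coeff_derivative,
    coeff_C_mul]
  ring

theorem coeff_eulerianPoly_eq_zero {m i : ℕ} (h : m < i) : (eulerianPoly m).coeff i = 0 := by
  induction m generalizing i with
  | zero => simp [eulerianPoly, coeff_one, h.ne']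
  | succ m ih =>
    obtain ⟨i, rfl⟩ := Nat.exists_eq_add_one_of_ne_zero h.ne_bot
    rw [coeff_eulerianPoly_succ_succ, ih (by omega), ih (by omega), mul_zero, mul_zero, add_zero]

theorem coeff_eulerianPoly_nonneg (m i : ℕ) : 0 ≤ (eulerianPoly m).coeff i := by
  induction m generalizing i with
  | zero => rw [eulerianPoly, coeff_one]; positivity
  | succ m ih =>
    cases i with
    | zero => simp [eulerianPoly]
    | succ i =>
      rw [coeff_eulerianPoly_succ_succ]
      rcases lt_or_ge m i with h | h
      · simp [coeff_eulerianPoly_eq_zero h, coeff_eulerianPoly_eq_zero (h.trans i.lt_succ_self)]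
      · have hi : (i : ℚ) ≤ m := mod_cast h
        exact add_nonneg (mul_nonneg (by positivity) (ih _))
          (mul_nonneg (by linarith) (ih _))

theorem coeff_eulerianPoly_pos {m i : ℕ} (hi : 1 ≤ i) (him : i ≤ m) :
    0 < (eulerianPoly m).coeff i := by
  induction m generalizing i with
  | zero => omega
  | succ m ih =>
    obtain ⟨i, rfl⟩ := Nat.exists_eq_add_of_le' hi
    have him' : (i : ℚ) ≤ m := mod_cast Nat.le_of_succ_le_succ him
    rw [coeff_eulerianPoly_succ_succ]
    rcases Nat.eq_zero_or_pos i with rfl | hi'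
    · rcases Nat.eq_zero_or_pos m with rfl | hm
      · simp [eulerianPoly, coeff_one]
      · exact add_pos_of_pos_of_nonneg (mul_pos (by positivity) (ih le_rfl hm))
          (mul_nonneg (by linarith) (coeff_eulerianPoly_nonneg _ _))
    · exact add_pos_of_nonneg_of_pos (mul_nonneg (by positivity) (coeff_eulerianPoly_nonneg _ _))
        (mul_pos (by linarith) (ih hi' (by omega)))

theorem mk_pow_mul_one_sub_X_pow_s12 (m : ℕ) :
    (PowerSeries.mk fun u ↦ (u : ℚ) ^ m) * (1 - PowerSeries.X : PowerSeries ℚ) ^ (m + 1) =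
      eulerianPoly m := by
  induction m with
  | zero =>
    have h : (PowerSeries.mk fun u ↦ (u : ℚ) ^ 0) = PowerSeries.mk 1 := by ext; simp
    rw [h, zero_add, pow_one, PowerSeries.mk_one_mul_one_sub_eq_one, eulerianPoly,
      Polynomial.coe_one]
  | succ m ih =>
    have hS : (PowerSeries.mk fun u ↦ (u : ℚ) ^ (m + 1)) =
        PowerSeries.X * PowerSeries.derivative ℚ (PowerSeries.mk fun u ↦ (u : ℚ) ^ m) := by
      ext u
      cases u with
      | zero => simp
      | succ u => simp [PowerSeries.coeff_succ_X_mul, PowerSeries.coeff_derivative, pow_succ]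
    rw [eulerianPoly, hS]
    push_cast
    rw [← PowerSeries.derivative_coe, ← ih, Derivation.leibniz, Derivation.leibniz_pow]
    simp only [smul_eq_mul, nsmul_eq_mul, map_sub, Derivation.map_one_eq_zero,
      PowerSeries.derivative_X, Nat.add_sub_cancel, map_add, map_natCast, map_one]
    push_cast
    ring

end Eulerian

section CauchyProduct

theorem derivative_mk_of_recurrence {K : Type*} [CommRing K] {a : ℕ → K} {u x : K}
    (ha : ∀ j : ℕ, (j + 1) * a (j + 1) = (u + j * x) * a j) :
    PowerSeries.derivative K (PowerSeries.mk a) =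
      PowerSeries.mk (fun j ↦ u * x ^ j) * PowerSeries.mk a := by
  ext n
  simp only [PowerSeries.coeff_derivative, PowerSeries.coeff_mul, PowerSeries.coeff_mk]
  rw [mul_comm, ha]
  induction n with
  | zero => simp
  | succ n ih =>
    rw [Nat.sum_antidiagonal_succ]
    simp only [pow_zero, mul_one, pow_succ', mul_left_comm u x, mul_assoc x]
    rw [← Finset.mul_sum, ← ih, ← ha n]
    push_cast
    ring

theorem succ_mul_sum_antidiagonal_of_recurrence {K : Type*} [CommRing K] {a b : ℕ → K}
    {u v x w : K}
    (ha : ∀ j : ℕ, (j + 1) * a (j + 1) = (u + j * x) * a j)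
    (hb : ∀ j : ℕ, (j + 1) * b (j + 1) = (v + j * w) * b j) (n : ℕ) :
    (n + 1) * ∑ p ∈ antidiagonal (n + 1), a p.1 * b p.2 =
      ∑ p ∈ antidiagonal n,
        (u * x ^ p.1 + v * w ^ p.1) * ∑ r ∈ antidiagonal p.2, a r.1 * b r.2 := by
  have h : PowerSeries.derivative K (PowerSeries.mk a * PowerSeries.mk b) =
      PowerSeries.mk (fun j ↦ u * x ^ j + v * w ^ j) * (PowerSeries.mk a * PowerSeries.mk b) := by
    have hadd : (PowerSeries.mk fun j ↦ u * x ^ j + v * w ^ j) =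
        (PowerSeries.mk fun j ↦ u * x ^ j) + PowerSeries.mk fun j ↦ v * w ^ j := by ext; simp
    rw [Derivation.leibniz, derivative_mk_of_recurrence ha, derivative_mk_of_recurrence hb, hadd,
      smul_eq_mul, smul_eq_mul]
    ring
  have hn := congrArg (PowerSeries.coeff n) h
  simp only [PowerSeries.coeff_derivative, PowerSeries.coeff_mul, PowerSeries.coeff_mk] at hn
  rw [mul_comm, hn]

end CauchyProduct

section PolynomialCoefficients

open Polynomial

theorem coeff_geom_sum (R : Type*) [Semiring R] (n l : ℕ) :
    (∑ a ∈ range n, (X : R[X]) ^ a).coeff l = if l < n then 1 else 0 := by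
  simp [finsetSum_coeff, coeff_X_pow]

theorem coeff_mul_nonneg {R : Type*} [Semiring R] [PartialOrder R] [IsOrderedRing R] {p q : R[X]}
    (hp : ∀ l, 0 ≤ p.coeff l) (hq : ∀ l, 0 ≤ q.coeff l) (l : ℕ) : 0 ≤ (p * q).coeff l := by
  rw [coeff_mul]
  exact Finset.sum_nonneg fun x _ ↦ mul_nonneg (hp _) (hq _)

theorem coeff_mul_pos {R : Type*} [Semiring R] [PartialOrder R] [IsStrictOrderedRing R]
    {p q : R[X]} (hp : ∀ l, 0 ≤ p.coeff l) (hq : ∀ l, 0 ≤ q.coeff l) {a b : ℕ}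
    (ha : 0 < p.coeff a) (hb : 0 < q.coeff b) : 0 < (p * q).coeff (a + b) := by
  rw [coeff_mul]
  exact Finset.sum_pos' (fun x _ ↦ mul_nonneg (hp _) (hq _))
    ⟨(a, b), mem_antidiagonal.mpr rfl, mul_pos ha hb⟩

theorem coeff_geom_sum_nonneg (R : Type*) [Semiring R] [PartialOrder R] [IsOrderedRing R]
    (n l : ℕ) : 0 ≤ (∑ a ∈ range n, (X : R[X]) ^ a).coeff l := by
  rw [coeff_geom_sum]
  split_ifs
  exacts [zero_le_one, le_rfl]

end PolynomialCoefficients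

section BoxTerms

open Polynomial

theorem succ_mul_C_inv_factorial_succ (F : Type*) [Field F] [CharZero F] (d : ℕ) :
    ((d : F[X]) + 1) * C ((d + 1).factorial : F)⁻¹ = C (d.factorial : F)⁻¹ := by
  have hd : (d : F[X]) + 1 = C ((d : F) + 1) := by simp
  rw [hd, ← C_mul, Nat.factorial_succ]
  push_cast
  field_simp

theorem succ_mul_preHilbertPoly_succ (F : Type*) [Field F] [CharZero F] (d k : ℕ) :
    ((d : F[X]) + 1) * preHilbertPoly F (d + 1) k =
      (X - (k : F[X]) + 1 + (d : F[X])) * preHilbertPoly F d k := by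
  have hcomp : (ascPochhammer F (d + 1)).comp (X - C (k : F) + 1) =
      (ascPochhammer F d).comp (X - C (k : F) + 1) * (X - (k : F[X]) + 1 + (d : F[X])) := by
    rw [ascPochhammer_succ_right, mul_comp, add_comp, X_comp, natCast_comp, C_eq_natCast]
  simp only [preHilbertPoly, smul_eq_C_mul]
  rw [← mul_assoc, succ_mul_C_inv_factorial_succ, hcomp]
  ring

theorem succ_mul_preHilbertPoly_succ_succ (F : Type*) [Field F] [CharZero F] (d k : ℕ) :
    ((d : F[X]) + 1) * preHilbertPoly F (d + 1) (k + 1) =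
      (X - (k : F[X])) * preHilbertPoly F d k := by
  have hcomp : (ascPochhammer F (d + 1)).comp (X - C ((k + 1 : ℕ) : F) + 1) =
      (X - (k : F[X])) * (ascPochhammer F d).comp (X - C (k : F) + 1) := by
    have harg : X - C ((k + 1 : ℕ) : F) + 1 = X - (k : F[X]) := by
      rw [C_eq_natCast]
      push_cast
      ring
    rw [harg, ascPochhammer_succ_left, mul_comp, comp_assoc, add_comp, X_comp, one_comp,
      C_eq_natCast]
  simp only [preHilbertPoly, smul_eq_C_mul]
  rw [← mul_assoc, succ_mul_C_inv_factorial_succ, hcomp]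
  ring

/-- The inclusion-exclusion term `C(d, j) * C(y - j + d, d)`, as a polynomial in `y`; it vanishes
for `d < j`. -/
def boxTerm (d j : ℕ) : ℚ[X] := C (d.choose j : ℚ) * preHilbertPoly ℚ d j

theorem boxTerm_add (j e : ℕ) :
    boxTerm (j + e) j = preHilbertPoly ℚ j j * preHilbertPoly ℚ e 0 := by
  have hchoose : (((j + e).choose j : ℕ) : ℚ) * ((j + e).factorial : ℚ)⁻¹ =
      (j.factorial : ℚ)⁻¹ * (e.factorial : ℚ)⁻¹ := by
    rw [Nat.cast_add_choose]
    have := Nat.factorial_ne_zero (j + e)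
    field_simp
  have hcomp : (X + (j : ℚ[X])).comp (X - C (j : ℚ) + 1) = X - C ((0 : ℕ) : ℚ) + 1 := by
    simp only [add_comp, X_comp, natCast_comp, C_eq_natCast, Nat.cast_zero, C_0]
    ring
  simp only [boxTerm, preHilbertPoly, smul_eq_C_mul]
  rw [← ascPochhammer_mul, mul_comp, comp_assoc, hcomp, ← mul_assoc, ← C_mul, hchoose, C_mul]
  ring

theorem boxTerm_eq_zero {d j : ℕ} (h : d < j) : boxTerm d j = 0 := by
  rw [boxTerm, Nat.choose_eq_zero_of_lt h, Nat.cast_zero, C_0, zero_mul]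

theorem natDegree_boxTerm_le (d j : ℕ) : (boxTerm d j).natDegree ≤ d :=
  (natDegree_C_mul_le _ _).trans (natDegree_preHilbertPoly ℚ d j).le

theorem eval_boxTerm (d j y : ℕ) : (boxTerm d j).eval (y : ℚ) =
    if j ≤ y then (d.choose j : ℚ) * ((d + (y - j)).choose d : ℕ) else 0 := by
  rw [boxTerm, eval_C_mul]
  split_ifs with hjy
  · rw [preHilbertPoly_eq_choose_sub_add ℚ d hjy, add_comm]
  · rcases lt_or_ge d j with hdj | hjd
    · rw [← eval_C_mul, ← boxTerm, boxTerm_eq_zero hdj, eval_zero]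
    · obtain ⟨i, rfl⟩ := Nat.exists_eq_add_of_lt (not_le.mp hjy)
      have harg : ((y : ℚ) - (y + i + 1 : ℕ) + 1) = -(i : ℚ) := by push_cast; ring
      have hzero : (preHilbertPoly ℚ d (y + i + 1)).eval (y : ℚ) = 0 := by
        rw [preHilbertPoly, eval_smul, eval_comp, eval_add, eval_sub, eval_X, eval_C, eval_one,
          harg, ascPochhammer_eval_neg_coe_nat_of_lt (by omega), smul_zero]
      rw [hzero, mul_zero]

/-- The generating polynomial `∑ j, (-q) ^ j * boxTerm d j` in `ℚ[q][y]`, i.e. the coefficient of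
`z ^ d` in `(1 - q * z) ^ y * (1 - z) ^ (-y - 1)`. -/
def boxTermGen (d : ℕ) : ℚ[X][X] :=
  ∑ j ∈ range (d + 1), C ((-X) ^ j) * (boxTerm d j).map C

theorem coeff_coeff_boxTermGen (d m j : ℕ) :
    ((boxTermGen d).coeff m).coeff j = (-1) ^ j * (boxTerm d j).coeff m := by
  have hterm (i : ℕ) : (C ((-X) ^ i) * (boxTerm d i).map C).coeff m =
      C ((-1) ^ i * (boxTerm d i).coeff m) * X ^ i := by
    rw [coeff_C_mul, coeff_map, neg_pow, C_mul, C_pow, C_neg, C_1]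
    ring
  simp only [boxTermGen, finsetSum_coeff, hterm, coeff_C_mul_X_pow]
  rw [Finset.sum_ite_eq]
  split_ifs with hj
  · rfl
  · rw [boxTerm_eq_zero (by simpa using hj), coeff_zero, mul_zero]

theorem succ_mul_boxTermGen_succ (n : ℕ) :
    ((n : ℚ[X][X]) + 1) * boxTermGen (n + 1) =
      ∑ p ∈ antidiagonal n, (1 + X * (1 - C X ^ (p.1 + 1))) * boxTermGen p.2 := by
  have hgen (d : ℕ) : boxTermGen d = ∑ p ∈ antidiagonal d,
      (C ((-X) ^ p.1) * (preHilbertPoly ℚ p.1 p.1).map C) * (preHilbertPoly ℚ p.2 0).map C := by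
    rw [boxTermGen, ← Nat.sum_antidiagonal_eq_sum_range_succ_mk
      (fun p ↦ C ((-X) ^ p.1) * (boxTerm d p.1).map C)]
    refine Finset.sum_congr rfl fun p hp ↦ ?_
    rw [← mem_antidiagonal.mp hp, boxTerm_add, Polynomial.map_mul, mul_assoc]
  have hself (j : ℕ) : ((j : ℚ[X][X]) + 1) *
      (C ((-X) ^ (j + 1)) * (preHilbertPoly ℚ (j + 1) (j + 1)).map C) =
      (-(C X * X : ℚ[X][X]) + (j : ℚ[X][X]) * C X) *
        (C ((-X) ^ j) * (preHilbertPoly ℚ j j).map C) := by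
    have h := congrArg (Polynomial.map (C : ℚ →+* ℚ[X])) (succ_mul_preHilbertPoly_succ_succ ℚ j j)
    simp only [Polynomial.map_mul, Polynomial.map_add, Polynomial.map_sub, Polynomial.map_natCast,
      Polynomial.map_one, Polynomial.map_X] at h
    rw [pow_succ, C_mul, C_neg]
    linear_combination -C ((-X) ^ j) * C X * h
  have hzero (e : ℕ) : ((e : ℚ[X][X]) + 1) * (preHilbertPoly ℚ (e + 1) 0).map C =
      (X + 1 + (e : ℚ[X][X]) * 1) * (preHilbertPoly ℚ e 0).map C := by
    have h := congrArg (Polynomial.map (C : ℚ →+* ℚ[X])) (succ_mul_preHilbertPoly_succ ℚ e 0)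
    simp only [Polynomial.map_mul, Polynomial.map_add, Polynomial.map_natCast, Polynomial.map_one,
      Polynomial.map_X, Nat.cast_zero, sub_zero] at h
    linear_combination h
  have hrec := succ_mul_sum_antidiagonal_of_recurrence
    (a := fun j ↦ C ((-X) ^ j) * (preHilbertPoly ℚ j j).map C)
    (b := fun e ↦ (preHilbertPoly ℚ e 0).map C) hself hzero n
  simp only [← hgen] at hrec
  rw [hrec]
  refine Finset.sum_congr rfl fun p _ ↦ ?_
  ring

/-- The coefficient of `z ^ d` in `(1 - z)⁻¹ * exp (w * ∑ p ≥ 1, [p]_q * z ^ p / p)`, as a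
polynomial in `w` over `ℚ[q]`, where `[p]_q = 1 + q + ⋯ + q ^ (p - 1)`; at `q = 1` this is the
Laguerre polynomial `L_d(-w)`. The recursion is the logarithmic derivative in `z`. -/
def qLaguerre : ℕ → ℚ[X][X]
  | 0 => 1
  | n + 1 => C (C ((n : ℚ) + 1)⁻¹) *
      ∑ i : Fin (n + 1), (1 + C (∑ a ∈ range (i + 1), X ^ a) * X) * qLaguerre (n - i)

theorem C_mul_qLaguerre_succ (n : ℕ) :
    C (C ((n : ℚ) + 1)) * qLaguerre (n + 1) =
      ∑ p ∈ antidiagonal n, (1 + C (∑ a ∈ range (p.1 + 1), X ^ a) * X) * qLaguerre p.2 := by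
  rw [qLaguerre, ← mul_assoc, ← C_mul, ← C_mul, mul_inv_cancel₀ n.cast_add_one_ne_zero, C_1, C_1,
    one_mul, Nat.sum_antidiagonal_eq_sum_range_succ_mk, ← Fin.sum_univ_eq_sum_range
      (fun i ↦ (1 + C (∑ a ∈ range (i + 1), X ^ a) * X) * qLaguerre (n - i))]

theorem boxTermGen_eq_qLaguerre_comp (d : ℕ) :
    boxTermGen d = (qLaguerre d).comp (C (1 - X) * X) := by
  induction d using Nat.strong_induction_on with
  | _ d ih =>
  cases d with
  | zero => simp [boxTermGen, qLaguerre, boxTerm, preHilbertPoly]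
  | succ n =>
    have hn : (n : ℚ[X][X]) + 1 ≠ 0 := n.cast_add_one_ne_zero
    have hcast : (n : ℚ[X][X]) + 1 = C (C ((n : ℚ) + 1)) := by simp
    have hrec := congrArg (fun P : ℚ[X][X] ↦ P.comp (C (1 - X) * X)) (C_mul_qLaguerre_succ n)
    simp only [mul_comp, add_comp, Polynomial.sum_comp, C_comp, X_comp, one_comp] at hrec
    refine mul_left_cancel₀ hn ?_
    rw [succ_mul_boxTermGen_succ, hcast, hrec]
    refine Finset.sum_congr rfl fun p hp ↦ ?_
    have hgeom : (C (∑ a ∈ range (p.1 + 1), X ^ a) * C (1 - X) : ℚ[X][X]) =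
        1 - C X ^ (p.1 + 1) := by
      rw [← C_mul, geom_sum_mul_neg, C_sub, C_1, C_pow]
    rw [ih p.2 (Nat.antidiagonal.snd_lt hp), ← mul_assoc, hgeom, mul_comm X]

theorem C_mul_coeff_qLaguerre_succ_succ (n m : ℕ) :
    C ((n : ℚ) + 1) * (qLaguerre (n + 1)).coeff (m + 1) =
      ∑ p ∈ antidiagonal n, ((qLaguerre p.2).coeff (m + 1) +
        (∑ a ∈ range (p.1 + 1), X ^ a) * (qLaguerre p.2).coeff m) := by
  rw [← coeff_C_mul, C_mul_qLaguerre_succ, finsetSum_coeff]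
  simp only [add_mul, one_mul, mul_assoc, coeff_add, coeff_C_mul, coeff_X_mul]

theorem coeff_zero_qLaguerre (d : ℕ) : (qLaguerre d).coeff 0 = 1 := by
  induction d using Nat.strong_induction_on with
  | _ d ih =>
  cases d with
  | zero => simp [qLaguerre]
  | succ n =>
    have hn : C ((n : ℚ) + 1) ≠ 0 := C_ne_zero.mpr n.cast_add_one_ne_zero
    refine mul_left_cancel₀ hn ?_
    rw [← coeff_C_mul, C_mul_qLaguerre_succ, finsetSum_coeff]
    have hterm : ∀ p ∈ antidiagonal n,
        ((1 + C (∑ a ∈ range (p.1 + 1), X ^ a) * X) * qLaguerre p.2).coeff 0 = 1 := fun p hp ↦ by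
      rw [mul_coeff_zero, ih p.2 (Nat.antidiagonal.snd_lt hp)]
      simp
    rw [Finset.sum_congr rfl hterm]
    simp

theorem coeff_coeff_qLaguerre_nonneg (d m l : ℕ) : 0 ≤ ((qLaguerre d).coeff m).coeff l := by
  induction d using Nat.strong_induction_on generalizing m l with
  | _ d ih =>
  cases m with
  | zero => rw [coeff_zero_qLaguerre, coeff_one]; positivity
  | succ m =>
    cases d with
    | zero => simp [qLaguerre, coeff_one]
    | succ n =>
      have hn : (0 : ℚ) < n + 1 := n.cast_add_one_pos
      refine nonneg_of_mul_nonneg_right ?_ hn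
      rw [← coeff_C_mul, C_mul_coeff_qLaguerre_succ_succ, finsetSum_coeff]
      refine Finset.sum_nonneg fun p hp ↦ ?_
      have hlt : p.2 < n + 1 := Nat.antidiagonal.snd_lt hp
      rw [coeff_add]
      exact add_nonneg (ih _ hlt _ _) (coeff_mul_nonneg (coeff_geom_sum_nonneg ℚ _) (ih _ hlt _) _)

theorem coeff_coeff_qLaguerre_pos {d m l : ℕ} (hm : 1 ≤ m) (hml : m + l ≤ d) :
    0 < ((qLaguerre d).coeff m).coeff l := by
  induction d generalizing m with
  | zero => omega
  | succ n ih =>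
    obtain ⟨m, rfl⟩ := Nat.exists_eq_add_of_le' hm
    have hn : (0 : ℚ) < n + 1 := n.cast_add_one_pos
    refine pos_of_mul_pos_right ?_ hn.le
    rw [← coeff_C_mul, C_mul_coeff_qLaguerre_succ_succ, finsetSum_coeff]
    have hmul (p : ℕ × ℕ) := coeff_mul_nonneg (coeff_geom_sum_nonneg ℚ (p.1 + 1))
      (coeff_coeff_qLaguerre_nonneg p.2 m) l
    simp only [coeff_add]
    refine Finset.sum_pos' (fun p _ ↦ add_nonneg (coeff_coeff_qLaguerre_nonneg _ _ _) (hmul p)) ?_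
    rcases Nat.eq_zero_or_pos m with rfl | hm'
    · refine ⟨(n, 0), by simp, add_pos_of_nonneg_of_pos (coeff_coeff_qLaguerre_nonneg _ _ _) ?_⟩
      rw [coeff_zero_qLaguerre, mul_one, coeff_geom_sum, if_pos (by omega)]
      exact one_pos
    · refine ⟨(0, n), by simp, add_pos_of_nonneg_of_pos (coeff_coeff_qLaguerre_nonneg _ _ _) ?_⟩
      rw [zero_add, sum_range_one, pow_zero, one_mul]
      exact ih hm' (by omega)

end BoxTerms

section LatticePoints

theorem indepCount_eq_card_filter_piFinset_Icc (k d t : ℕ) : indepCount k d t =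
    #{x ∈ Fintype.piFinset fun _ : Fin d ↦ Icc (0 : ℤ) t | ∑ i, x i ≤ (k : ℤ) * t} :=
  Nat.subtype_card _ fun x ↦ by simp only [mem_filter, Fintype.mem_piFinset, mem_Icc]

theorem indepCount_eq_card_filter_piFinset_range (k d t : ℕ) : indepCount k d t =
    #{x ∈ Fintype.piFinset fun _ : Fin d ↦ range (t + 1) | ∑ i, x i ≤ k * t} := by
  rw [indepCount_eq_card_filter_piFinset_Icc, eq_comm]
  refine card_bij (fun x _ i ↦ (x i : ℤ)) (fun x hx ↦ ?_) (fun x _ y _ hxy ↦ ?_) fun y hy ↦ ?_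
  · simp only [mem_filter, Fintype.mem_piFinset, mem_range_succ_iff, mem_Icc] at hx ⊢
    exact ⟨fun i ↦ ⟨by positivity, mod_cast hx.1 i⟩, mod_cast hx.2⟩
  · exact funext fun i ↦ mod_cast congrFun hxy i
  · simp only [mem_filter, Fintype.mem_piFinset, mem_Icc] at hy
    lift y to Fin d → ℕ using fun i ↦ (hy.1 i).1
    refine ⟨y, ?_, rfl⟩
    simp only [mem_filter, Fintype.mem_piFinset, mem_range_succ_iff] at hy ⊢
    exact ⟨fun i ↦ Int.ofNat_le.mp (hy.1 i).2, by exact_mod_cast hy.2⟩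

theorem halfOpenCount_add_indepCount (k n t : ℕ) :
    halfOpenCount (k + 1) n t + indepCount k (n - 1) t = indepCount (k + 1) (n - 1) t := by
  let S : Finset (Fin (n - 1) → ℤ) :=
    {x ∈ Fintype.piFinset fun _ ↦ Icc (0 : ℤ) t | ∑ i, x i ≤ ((k + 1 : ℕ) : ℤ) * t}
  have hhalf : halfOpenCount (k + 1) n t = #{x ∈ S | ¬ ∑ i, x i ≤ (k : ℤ) * t} :=
    Nat.subtype_card _ fun x ↦ by
      simp only [S, mem_filter, Fintype.mem_piFinset, mem_Icc, not_le, Nat.cast_add, Nat.cast_one,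
        add_sub_cancel_right]
      tauto
  have hindep : indepCount k (n - 1) t = #{x ∈ S | ∑ i, x i ≤ (k : ℤ) * t} := by
    rw [indepCount_eq_card_filter_piFinset_Icc, filter_filter]
    refine congrArg card (filter_congr fun x _ ↦ (and_iff_right_of_imp fun h ↦ h.trans ?_).symm)
    gcongr
    exact k.le_succ
  rw [hhalf, hindep, add_comm, card_filter_add_card_filter_not,
    indepCount_eq_card_filter_piFinset_Icc]

theorem halfOpenCount_zero (k n : ℕ) : halfOpenCount k n 0 = 0 := by
  have : IsEmpty {x : Fin (n - 1) → ℤ // (∀ i, 0 ≤ x i ∧ x i ≤ ((0 : ℕ) : ℤ)) ∧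
      ((k : ℤ) - 1) * (0 : ℕ) < ∑ i, x i ∧ ∑ i, x i ≤ (k : ℤ) * (0 : ℕ)} :=
    ⟨fun x ↦ by simpa using x.2.2.1.trans_le x.2.2.2⟩
  exact Nat.card_of_isEmpty

end LatticePoints

section BoxGeneratingFunction

open PowerSeries

theorem coeff_geom_sum_pow_mul_mk_one {R : Type*} [CommSemiring R] (d n s : ℕ) :
    coeff s ((∑ a ∈ range n, (X : R⟦X⟧) ^ a) ^ d * (PowerSeries.mk 1 : R⟦X⟧)) =
      #{x ∈ Fintype.piFinset fun _ : Fin d ↦ range n | ∑ i, x i ≤ s} := by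
  rw [← Fin.prod_const, Finset.prod_univ_sum, Finset.sum_mul, map_sum]
  simp only [Finset.prod_pow_eq_pow_sum, coeff_X_pow_mul', coeff_mk, Pi.one_apply, sum_boole]

theorem geom_sum_pow_mul_mk_one {R : Type*} [CommRing R] (d n : ℕ) :
    (∑ a ∈ range n, (X : R⟦X⟧) ^ a) ^ d * PowerSeries.mk 1 =
      (1 - X ^ n) ^ d * PowerSeries.mk fun i ↦ ((d + i).choose d : R) := by
  have hgeom : (∑ a ∈ range n, (X : R⟦X⟧) ^ a) * (1 - X) = 1 - X ^ n := geom_sum_mul_neg X n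
  have hone : (PowerSeries.mk 1 : R⟦X⟧) * (1 - X) = 1 := mk_one_mul_one_sub_eq_one R
  have hchoose := mk_add_choose_mul_one_sub_pow_eq_one R d
  rw [← hgeom, mul_pow]
  linear_combination (∑ a ∈ range n, (X : R⟦X⟧) ^ a) ^ d *
    ((1 - X) ^ d * (PowerSeries.mk fun i ↦ ((d + i).choose d : R)) * hone -
      PowerSeries.mk 1 * hchoose)

theorem card_filter_piFinset_range_sum_le {R : Type*} [CommRing R] (d n s : ℕ) :
    (#{x ∈ Fintype.piFinset fun _ : Fin d ↦ range n | ∑ i, x i ≤ s} : R) =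
      ∑ j ∈ range (d + 1), (-1) ^ j *
        if n * j ≤ s then (d.choose j : R) * ((d + (s - n * j)).choose d : ℕ) else 0 := by
  rw [← coeff_geom_sum_pow_mul_mk_one, geom_sum_pow_mul_mk_one, sub_eq_neg_add, add_pow,
    Finset.sum_mul, map_sum]
  refine Finset.sum_congr rfl fun j _ ↦ ?_
  have hterm : (-X ^ n : R⟦X⟧) ^ j * 1 ^ (d - j) * (d.choose j : R⟦X⟧) =
      C ((-1) ^ j * (d.choose j : R)) * X ^ (n * j) := by
    rw [neg_pow, ← pow_mul, one_pow, mul_one, map_mul, map_pow, map_neg, map_one, map_natCast]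
    ring
  rw [hterm, mul_assoc, coeff_C_mul, coeff_X_pow_mul', coeff_mk, mul_assoc, mul_ite, mul_zero]

end BoxGeneratingFunction

section Ehrhart

open Polynomial

/-- The Ehrhart polynomial of the independence polytope of the uniform matroid `U_{k,d}`, by
inclusion-exclusion over the coordinates that exceed `t`. -/
def indepEhrhart (k d : ℕ) : ℚ[X] :=
  ∑ p ∈ antidiagonal k, C ((-1) ^ p.1) * (boxTerm d p.1).comp (C (p.2 : ℚ) * X)

theorem eval_indepEhrhart (k d t : ℕ) :
    (indepEhrhart k d).eval (t : ℚ) = indepCount k d t := by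
  rw [indepCount_eq_card_filter_piFinset_range, card_filter_piFinset_range_sum_le, indepEhrhart,
    eval_finsetSum, Nat.sum_antidiagonal_eq_sum_range_succ_mk]
  refine Finset.sum_congr_of_eq_on_inter (fun j _ hj ↦ ?_) (fun j _ hj ↦ ?_) fun j hj _ ↦ ?_
  · rw [boxTerm_eq_zero (by simpa using hj), zero_comp, mul_zero, eval_zero]
  · have hjk : k < j := by simpa using hj
    rw [if_neg (by nlinarith), mul_zero]
  · obtain ⟨i, rfl⟩ := Nat.exists_eq_add_of_le (mem_range_succ_iff.mp hj)
    have hiff : (t + 1) * j ≤ (j + i) * t ↔ j ≤ i * t := by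
      constructor <;> intro h <;> nlinarith
    have hsub : (j + i) * t - (t + 1) * j = i * t - j := by
      rw [add_mul, add_mul, mul_comm t, one_mul, Nat.add_sub_add_left]
    rw [eval_C_mul, eval_comp, eval_C_mul, eval_X, Nat.add_sub_cancel_left, ← Nat.cast_mul,
      eval_boxTerm, hsub]
    simp only [hiff]

theorem natDegree_indepEhrhart_le (k d : ℕ) : (indepEhrhart k d).natDegree ≤ d := by
  refine natDegree_sum_le_of_forall_le _ _ fun p _ ↦ (natDegree_C_mul_le _ _).trans ?_
  calc ((boxTerm d p.1).comp (C (p.2 : ℚ) * X)).natDegree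
      ≤ (boxTerm d p.1).natDegree * (C (p.2 : ℚ) * X).natDegree := natDegree_comp_le
    _ ≤ d * 1 :=
        Nat.mul_le_mul (natDegree_boxTerm_le _ _) ((natDegree_C_mul_le _ _).trans natDegree_X_le)
    _ = d := mul_one d

theorem coeff_indepEhrhart (k d m : ℕ) :
    (indepEhrhart k d).coeff m = PowerSeries.coeff k
      (((boxTermGen d).coeff m : PowerSeries ℚ) * PowerSeries.mk fun u ↦ (u : ℚ) ^ m) := by
  rw [indepEhrhart, finsetSum_coeff, PowerSeries.coeff_mul]
  refine Finset.sum_congr rfl fun p _ ↦ ?_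
  rw [coeff_C_mul, comp_C_mul_X_coeff, coeff_coe, coeff_coeff_boxTermGen, PowerSeries.coeff_mk,
    mul_assoc]

theorem coeff_indepEhrhart_succ_sub (k d m : ℕ) :
    (indepEhrhart (k + 1) d - indepEhrhart k d).coeff m =
      (eulerianPoly m * (qLaguerre d).coeff m).coeff (k + 1) := by
  have hseries : (1 - PowerSeries.X : PowerSeries ℚ) *
      (((boxTermGen d).coeff m : PowerSeries ℚ) * PowerSeries.mk fun u ↦ (u : ℚ) ^ m) =
      (eulerianPoly m * (qLaguerre d).coeff m : ℚ[X]) := by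
    rw [boxTermGen_eq_qLaguerre_comp, comp_C_mul_X_coeff]
    push_cast
    rw [← mk_pow_mul_one_sub_X_pow_s12]
    ring
  rw [← coeff_coe (eulerianPoly m * _), ← hseries, coeff_sub, coeff_indepEhrhart,
    coeff_indepEhrhart, sub_mul, one_mul, map_sub, PowerSeries.coeff_succ_X_mul]

theorem coeff_indepEhrhart_succ_sub_pos {k d m : ℕ} (hkd : k < d) (hm : 1 ≤ m) (hmd : m ≤ d) :
    0 < (indepEhrhart (k + 1) d - indepEhrhart k d).coeff m := by
  have hdeg : min m (k + 1) + (k + 1 - min m (k + 1)) = k + 1 := by omega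
  rw [coeff_indepEhrhart_succ_sub, ← hdeg]
  exact coeff_mul_pos (coeff_eulerianPoly_nonneg m) (coeff_coeff_qLaguerre_nonneg d m)
    (coeff_eulerianPoly_pos (by omega) (by omega)) (coeff_coeff_qLaguerre_pos hm (by omega))

end Ehrhart

theorem halfOpen_ehrhart_positive (k n : ℕ) (hk : 1 < k) (hkn : k ≤ n - 1) :
    ∃ p : Polynomial ℚ, p.natDegree = n - 1 ∧
      (∀ t : ℕ, (halfOpenCount k n t : ℚ) = p.eval (t : ℚ)) ∧
      (∀ m, 1 ≤ m → m ≤ n - 1 → 0 < p.coeff m) ∧ p.coeff 0 = 0 := by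
  obtain ⟨k, rfl⟩ := Nat.exists_eq_add_of_le' hk.le
  set p := indepEhrhart (k + 1) (n - 1) - indepEhrhart k (n - 1) with hp
  have heval (t : ℕ) : (halfOpenCount (k + 1) n t : ℚ) = p.eval (t : ℚ) := by
    rw [hp, Polynomial.eval_sub, eval_indepEhrhart, eval_indepEhrhart,
      ← halfOpenCount_add_indepCount, Nat.cast_add, add_sub_cancel_right]
  have hpos (m : ℕ) (hm : 1 ≤ m) (hmn : m ≤ n - 1) : 0 < p.coeff m :=
    coeff_indepEhrhart_succ_sub_pos (by omega) hm hmn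
  have hdeg : p.natDegree ≤ n - 1 :=
    (Polynomial.natDegree_sub_le _ _).trans
      (max_le (natDegree_indepEhrhart_le _ _) (natDegree_indepEhrhart_le _ _))
  refine ⟨p, hdeg.antisymm ?_, heval, hpos, ?_⟩
  · exact Polynomial.le_natDegree_of_ne_zero (hpos _ (by omega) le_rfl).ne'
  · rw [Polynomial.coeff_zero_eq_eval_zero, ← Nat.cast_zero, ← heval, halfOpenCount_zero,
      Nat.cast_zero]
end
end
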